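/- arXiv:2111.02277 — 3 statements merged into one kernel-verified Lean document; each statement's English description precedes it below -/
import Mathlib

section
/- Let Φ be a hereditary graph property. Then the following are equivalent: (i) Φ is not meagre; (ii) there are graphs of arbitrarily large order on which Φ is 1, and there is at least one graph on which Φ is 0; (iii) Φ is not identically 1, and there are no positive integers s, t with Φ(K_s) = 0 and Φ(I_t) = 0, where K_s is the complete graph on s vertices and I_t is the edgeless graph on t vertices. -/
/-!
If a hereditary `Φ` fails on some graph, it fails on some graph of every larger order; if it also
holds on arbitrarily large graphs, it is therefore non-constant at infinitely many orders. If `Φ`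
fails on both a complete and an edgeless graph, Ramsey's theorem puts one of these inside every
large graph, so `Φ` is eventually constantly false.
-/

section Ramsey

variable {V : Type*} {G : SimpleGraph V} {A : Finset V}

open Finset

theorem exists_subset_isNClique_succ [DecidableRel G.Adj] {v : V} {n : ℕ} (hv : v ∈ A)
    (h : ∃ S ⊆ {w ∈ A | G.Adj v w}, G.IsNClique n S) : ∃ S ⊆ A, G.IsNClique (n + 1) S := by
  classical
  obtain ⟨S, hSA, hS⟩ := h
  exact ⟨insert v S, insert_subset hv (hSA.trans (filter_subset _ _)),
    hS.insert fun w hw ↦ (mem_filter.1 (hSA hw)).2⟩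

theorem card_filter_adj_add_card_filter_compl_adj [DecidableEq V] [DecidableRel G.Adj] {v : V}
    (hv : v ∈ A) : #{w ∈ A | G.Adj v w} + #{w ∈ A | Gᶜ.Adj v w} + 1 = #A := by
  have adj_filter : {w ∈ A | G.Adj v w} = {w ∈ A.erase v | G.Adj v w} := by
    ext w
    simp only [mem_filter, mem_erase]
    exact ⟨fun h ↦ ⟨⟨h.2.ne', h.1⟩, h.2⟩, fun h ↦ ⟨h.1.2, h.2⟩⟩
  have compl_adj_filter : {w ∈ A | Gᶜ.Adj v w} = {w ∈ A.erase v | ¬ G.Adj v w} := by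
    ext w
    simp only [mem_filter, mem_erase, SimpleGraph.compl_adj, ne_comm (a := v)]
    tauto
  rw [adj_filter, compl_adj_filter, card_filter_add_card_filter_not, card_erase_add_one hv]

/-- The Erdős–Szekeres bound `R(s + 1, t + 1) ≤ (s + t).choose s`: for `s, t > 0`, Pascal's rule
gives a vertex of `A` at least `(s + t - 1).choose (s - 1)` neighbours or at least
`(s + t - 1).choose s` non-neighbours in `A`. -/
theorem exists_isNClique_or_isNIndepSet_of_choose_le_card (s t : ℕ)
    (hA : (s + t).choose s ≤ #A) :
    (∃ S ⊆ A, G.IsNClique (s + 1) S) ∨ ∃ S ⊆ A, G.IsNIndepSet (t + 1) S := by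
  classical
  simp only [← SimpleGraph.isNClique_compl]
  have exists_mem {s t : ℕ} {A : Finset V} (hA : (s + t).choose s ≤ #A) : ∃ v, v ∈ A :=
    card_pos.1 <| (Nat.choose_pos (Nat.le_add_right s t)).trans_le hA
  induction s generalizing t A with
  | zero =>
    obtain ⟨v, hv⟩ := exists_mem hA
    exact .inl ⟨{v}, by simpa using hv, by simp⟩
  | succ s ihs =>
    induction t generalizing A with
    | zero =>
      obtain ⟨v, hv⟩ := exists_mem hA
      exact .inr ⟨{v}, by simpa using hv, by simp⟩
    | succ t iht =>
      obtain ⟨v, hv⟩ := exists_mem hA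
      have hcard := card_filter_adj_add_card_filter_compl_adj (G := G) hv
      have hpascal : (s + 1 + (t + 1)).choose (s + 1)
          = (s + (t + 1)).choose s + (s + 1 + t).choose (s + 1) := by
        rw [show s + 1 + (t + 1) = s + (t + 1) + 1 by ring, Nat.choose_succ_succ',
          show s + (t + 1) = s + 1 + t by ring]
      obtain hadj | hcompl : (s + (t + 1)).choose s ≤ #{w ∈ A | G.Adj v w} ∨
          (s + 1 + t).choose (s + 1) ≤ #{w ∈ A | Gᶜ.Adj v w} := by lia
      · exact (ihs (t + 1) hadj).imp (exists_subset_isNClique_succ hv)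
          (Exists.imp fun _ ↦ And.imp_left (·.trans (filter_subset _ A)))
      · exact (iht hcompl).imp
          (Exists.imp fun _ ↦ And.imp_left (·.trans (filter_subset _ A)))
          (exists_subset_isNClique_succ hv)

theorem nonempty_top_embedding_or_nonempty_bot_embedding [Fintype V] {s t : ℕ}
    (hV : (s + t).choose s ≤ Fintype.card V) :
    Nonempty ((⊤ : SimpleGraph (Fin (s + 1))) ↪g G) ∨
      Nonempty ((⊥ : SimpleGraph (Fin (t + 1))) ↪g G) := by
  obtain ⟨S, -, hS⟩ | ⟨S, -, hS⟩ :=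
    exists_isNClique_or_isNIndepSet_of_choose_le_card (G := G) (A := univ) s t hV
  · exact .inl ⟨SimpleGraph.topEmbeddingOfNotCliqueFree hS.not_cliqueFree⟩
  · have e := SimpleGraph.topEmbeddingOfNotCliqueFree
      ((SimpleGraph.isNClique_compl G).2 hS).not_cliqueFree
    exact .inr ⟨SimpleGraph.Embedding.complEquiv.symm (by simpa using e)⟩

end Ramsey

/-- A Boolean property of finite graphs, given by its values on graphs with vertex set `Fin n`. -/
abbrev GraphProperty := ∀ n : ℕ, SimpleGraph (Fin n) → Bool

namespace GraphProperty

/-- `Φ` is closed under taking induced subgraphs, encoded as pullbacks along injections; these are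
not assumed monotone, so that relabellings of the vertices are included. -/
def IsHereditary (Φ : GraphProperty) : Prop :=
  ∀ (n m : ℕ) (f : Fin m ↪ Fin n) (G : SimpleGraph (Fin n)),
    Φ n G = true → Φ m (G.comap f) = true

/-- `Φ` is constant on the graphs of order `k` for all but finitely many `k`. -/
def IsMeagre (Φ : GraphProperty) : Prop :=
  {k : ℕ | ∃ G₁ G₂ : SimpleGraph (Fin k), Φ k G₁ ≠ Φ k G₂}.Finite

variable {Φ : GraphProperty} {m n : ℕ}

theorem IsHereditary.eq_false_of_embedding (hΦ : Φ.IsHereditary) {H : SimpleGraph (Fin m)}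
    {G : SimpleGraph (Fin n)} (e : H ↪g G) (hH : Φ m H = false) : Φ n G = false := by
  contrapose! hH
  simpa [e.comap_eq] using hΦ n m e.toEmbedding G (by simpa using hH)

theorem IsHereditary.exists_eq_false_of_le (hΦ : Φ.IsHereditary) (hmn : m ≤ n)
    {H : SimpleGraph (Fin m)} (hH : Φ m H = false) : ∃ G : SimpleGraph (Fin n), Φ n G = false :=
  ⟨_, hΦ.eq_false_of_embedding (.map (Fin.castLEEmb hmn) H) hH⟩

theorem IsHereditary.not_isMeagre (hΦ : Φ.IsHereditary)
    (htrue : ∀ N : ℕ, ∃ n : ℕ, N ≤ n ∧ ∃ G : SimpleGraph (Fin n), Φ n G = true)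
    (hfalse : ∃ (n : ℕ) (G : SimpleGraph (Fin n)), Φ n G = false) : ¬ Φ.IsMeagre := by
  obtain ⟨m, H, hH⟩ := hfalse
  refine Set.infinite_of_forall_exists_gt fun N ↦ ?_
  obtain ⟨n, hn, G₁, hG₁⟩ := htrue (max m (N + 1))
  obtain ⟨G₂, hG₂⟩ := hΦ.exists_eq_false_of_le (le_of_max_le_left hn) hH
  exact ⟨n, ⟨G₁, G₂, by simp [hG₁, hG₂]⟩, le_of_max_le_right hn⟩

theorem IsHereditary.eq_false_of_choose_le (hΦ : Φ.IsHereditary) {s t : ℕ}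
    (htop : Φ (s + 1) ⊤ = false) (hbot : Φ (t + 1) ⊥ = false) (hn : (s + t).choose s ≤ n)
    (G : SimpleGraph (Fin n)) : Φ n G = false := by
  rcases nonempty_top_embedding_or_nonempty_bot_embedding (G := G) (by simpa using hn) with
    ⟨⟨e⟩⟩ | ⟨⟨e⟩⟩
  · exact hΦ.eq_false_of_embedding e htop
  · exact hΦ.eq_false_of_embedding e hbot

theorem IsHereditary.isMeagre_of_top_of_bot (hΦ : Φ.IsHereditary) {s t : ℕ}
    (htop : Φ (s + 1) ⊤ = false) (hbot : Φ (t + 1) ⊥ = false) : Φ.IsMeagre := by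
  refine (Set.finite_lt_nat ((s + t).choose s)).subset ?_
  rintro k ⟨G₁, G₂, hne⟩
  by_contra hk
  have key := hΦ.eq_false_of_choose_le htop hbot (not_lt.1 hk)
  exact hne ((key G₁).trans (key G₂).symm)

end GraphProperty

/-- Let `Φ` be a hereditary graph property (a Boolean function on finite simple
graphs, invariant under isomorphism and closed under taking induced subgraphs).
Then the following are equivalent:
(i)   `Φ` is not meagre (i.e. it fails to be `k`-trivial for infinitely many `k`);
(ii)  there are graphs of arbitrarily large order on which `Φ` is `1`, and there is
      at least one graph on which `Φ` is `0`;
(iii) `Φ` is not identically `1`, and there are no positive integers `s, t` with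
      `Φ(K_s) = 0` and `Φ(I_t) = 0`. -/
theorem stmt_1 (Φ : ∀ n : ℕ, SimpleGraph (Fin n) → Bool)
    (hiso : ∀ (n : ℕ) (G₁ G₂ : SimpleGraph (Fin n)), Nonempty (G₁ ≃g G₂) → Φ n G₁ = Φ n G₂)
    (hher : ∀ (n m : ℕ) (f : Fin m ↪ Fin n) (G : SimpleGraph (Fin n)),
      Φ n G = true → Φ m (G.comap f) = true) :
    List.TFAE [
      -- (i) Φ is not meagre
      ¬ ({k : ℕ | ∃ G₁ G₂ : SimpleGraph (Fin k), Φ k G₁ ≠ Φ k G₂}.Finite),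
      -- (ii) Φ is 1 on graphs of arbitrarily large order, and 0 on some graph
      (∀ N : ℕ, ∃ n : ℕ, N ≤ n ∧ ∃ G : SimpleGraph (Fin n), Φ n G = true) ∧
        (∃ (n : ℕ) (G : SimpleGraph (Fin n)), Φ n G = false),
      -- (iii) Φ is not identically 1, and never kills both a clique and an
      -- independent set
      (¬ ∀ (n : ℕ) (G : SimpleGraph (Fin n)), Φ n G = true) ∧
        ¬ ∃ s t : ℕ, 0 < s ∧ 0 < t ∧
          Φ s (⊤ : SimpleGraph (Fin s)) = false ∧ Φ t (⊥ : SimpleGraph (Fin t)) = false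
    ] := by
  have hΦ : GraphProperty.IsHereditary Φ := hher
  tfae_have 1 → 3 := by
    intro hmeagre
    refine ⟨fun htrue ↦ hmeagre (by simp [htrue]), ?_⟩
    rintro ⟨s, t, hs, ht, htop, hbot⟩
    obtain ⟨s, rfl⟩ := Nat.exists_eq_add_one.2 hs
    obtain ⟨t, rfl⟩ := Nat.exists_eq_add_one.2 ht
    exact hmeagre (hΦ.isMeagre_of_top_of_bot htop hbot)
  tfae_have 3 → 2 := by
    rintro ⟨hne, hhom⟩
    refine ⟨fun N ↦ ⟨N + 1, N.le_succ, ?_⟩, by simpa using hne⟩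
    by_contra! hfalse
    exact hhom ⟨N + 1, N + 1, N.succ_pos, N.succ_pos, by simpa using hfalse ⊤,
      by simpa using hfalse ⊥⟩
  tfae_have 2 → 1 := fun ⟨htrue, hfalse⟩ ↦ hΦ.not_isMeagre htrue hfalse
  tfae_finish
end

section
/- Let k be a prime and let Ψ be a {0,1}-valued function on the subsets of [k] × [k] that is invariant under the coordinatewise action of pairs of permutations, i.e., Ψ(A) = Ψ({(σ(u), τ(v)) : (u,v) ∈ A}) for all permutations σ, τ of [k] and all A ⊆ [k] × [k]. (Equivalently, Ψ is a bipartite property evaluated on the edge-subgraphs 𝐁_{k,k}[A] of the biclique 𝐁_{k,k}.) If Ψ([k] × [k]) ≠ Ψ(∅) — i.e., Ψ distinguishes the complete bipartite graph 𝐁_{k,k} from the edgeless bipartite graph 𝐈_{k,k} — then the integer Σ_{A ⊆ [k] × [k]} Ψ(A) · (−1)^{k² − |A|} is non-zero. -/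
/-!
This is the divisibility argument of Rivest and Vuillemin. Let a group act transitively on a set `X`
of prime power order `p ^ n`, and let `A` be a subset of `X`. Counting the pairs `(x, B)` with
`x ∈ B` and `B` in the orbit of `A` shows that `p ^ n` divides the orbit size times `|A|`. If `A` is
neither empty nor all of `X`, then `|A| < p ^ n`, so `p` divides the orbit size. Modulo `p`, an
invariant sum over all subsets therefore reduces to its terms at `∅` and `X`, and when `Ψ` separates
these two sets, what is left is `±1`.
-/

section Orbits

open MulAction

theorem natCast_dvd_sum_of_dvd_ncard_orbit {G α R : Type*} [Group G] [MulAction G α] [Semiring R]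
    {d : ℕ} {s : Finset α} {f : α → R} (hs : ∀ g : G, ∀ a ∈ s, g • a ∈ s)
    (hf : ∀ g : G, ∀ a ∈ s, f (g • a) = f a) (hd : ∀ a ∈ s, d ∣ (orbit G a).ncard) :
    (d : R) ∣ ∑ a ∈ s, f a := by
  classical
  rw [Finset.sum_partition (orbitRel G α)]
  refine Finset.dvd_sum fun ω hω => ?_
  obtain ⟨a, ha, rfl⟩ := Finset.mem_image.mp hω
  have mem_fiber (b : α) :
      b ∈ {b ∈ s | (⟦b⟧ : Quotient (orbitRel G α)) = ⟦a⟧} ↔ b ∈ orbit G a := by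
    rw [Finset.mem_filter, Quotient.eq, orbitRel_apply]
    refine and_iff_right_of_imp ?_
    rintro ⟨g, rfl⟩
    exact hs g a ha
  have f_eq_on_fiber : ∀ b ∈ {b ∈ s | (⟦b⟧ : Quotient (orbitRel G α)) = ⟦a⟧}, f b = f a := by
    intro b hb
    obtain ⟨g, rfl⟩ := (mem_fiber b).mp hb
    exact hf g a ha
  have card_fiber :
      {b ∈ s | (⟦b⟧ : Quotient (orbitRel G α)) = ⟦a⟧}.card = (orbit G a).ncard := by
    rw [← Set.ncard_coe_finset]
    exact congrArg Set.ncard (Set.ext mem_fiber)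
  rw [Finset.sum_congr rfl f_eq_on_fiber, Finset.sum_const, card_fiber, nsmul_eq_mul]
  exact (Nat.cast_dvd_cast (hd a ha)).mul_right _

end Orbits

section TransitiveAction

open Finset MulAction
open scoped Pointwise

variable {G X : Type*} [Group G] [MulAction G X] [IsPretransitive G X] [Fintype X] [DecidableEq X]

variable (G) in
theorem card_dvd_sum_card_of_smul_mem {𝒜 : Finset (Finset X)}
    (h𝒜 : ∀ g : G, ∀ A ∈ 𝒜, g • A ∈ 𝒜) : Fintype.card X ∣ ∑ A ∈ 𝒜, #A := by
  have degree_le (x y : X) : #{A ∈ 𝒜 | x ∈ A} ≤ #{A ∈ 𝒜 | y ∈ A} := by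
    obtain ⟨g, rfl⟩ := exists_smul_eq G x y
    refine card_le_card_of_injOn (g • ·) (fun A hA => ?_) (MulAction.injective g).injOn
    obtain ⟨hA, hx⟩ := mem_filter.mp hA
    exact mem_filter.mpr ⟨h𝒜 g A hA, smul_mem_smul_finset hx⟩
  cases isEmpty_or_nonempty X with
  | inl _ => simp [Finset.eq_empty_of_isEmpty]
  | inr hX =>
    obtain ⟨x⟩ := hX
    exact ⟨_, sum_card fun y => (degree_le y x).antisymm (degree_le x y)⟩

variable (G) in
theorem card_dvd_ncard_orbit_mul_card (A : Finset X) :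
    Fintype.card X ∣ (orbit G A).ncard * #A := by
  let 𝒜 : Finset (Finset X) := (orbit G A).toFinite.toFinset
  have card_eq : ∀ B ∈ 𝒜, #B = #A := by
    intro B hB
    obtain ⟨g, rfl⟩ := (Set.Finite.mem_toFinset _).mp hB
    exact card_smul_finset g A
  have stable (g : G) : ∀ B ∈ 𝒜, g • B ∈ 𝒜 := by
    simp only [𝒜, Set.Finite.mem_toFinset]
    exact fun B => mem_orbit_of_mem_orbit g
  have card_dvd := card_dvd_sum_card_of_smul_mem G stable
  rwa [sum_const_nat card_eq, ← Set.ncard_eq_toFinset_card] at card_dvd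

variable {p n : ℕ}

variable (G) in
theorem dvd_ncard_orbit_of_card_eq_pow (hp : p.Prime) (hX : Fintype.card X = p ^ n)
    {A : Finset X} (hA : A.Nonempty) (hA' : A ≠ univ) : p ∣ (orbit G A).ncard := by
  by_contra hndvd
  have coprime : (p ^ n).Coprime (orbit G A).ncard :=
    (hp.coprime_iff_not_dvd.mpr hndvd).pow_left n
  have card_dvd : Fintype.card X ∣ #A :=
    hX ▸ coprime.dvd_of_dvd_mul_left (hX ▸ card_dvd_ncard_orbit_mul_card G A)
  exact ((card_lt_iff_ne_univ A).mpr hA').not_ge (Nat.le_of_dvd hA.card_pos card_dvd)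

theorem natCast_dvd_sum_sub_empty_add_univ {R : Type*} [Ring R] (hp : p.Prime)
    (hX : Fintype.card X = p ^ n) {f : Finset X → R}
    (hf : ∀ (g : G) (A : Finset X), f (g • A) = f A) :
    (p : R) ∣ ∑ A, f A - (f ∅ + f univ) := by
  have : Nonempty X := Fintype.card_pos_iff.mp (hX ▸ pow_pos hp.pos n)
  rw [← sum_pair (univ_nonempty (α := X)).ne_empty.symm, ← sum_compl_add_sum {∅, univ},
    add_sub_cancel_right]
  refine natCast_dvd_sum_of_dvd_ncard_orbit (G := G) (fun g A hA => ?_) (fun g A _ => hf g A)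
    fun A hA => ?_
  · simpa [smul_eq_iff_eq_inv_smul] using hA
  · obtain ⟨hA, hA'⟩ : A ≠ ∅ ∧ A ≠ univ := by simpa using hA
    exact dvd_ncard_orbit_of_card_eq_pow G hp hX (nonempty_iff_ne_empty.mpr hA) hA'

theorem stmt_5_general (hp : p.Prime) (hX : Fintype.card X = p ^ n) {Ψ : Finset X → Bool}
    (hΨ : ∀ (g : G) (A : Finset X), Ψ (g • A) = Ψ A) (hne : Ψ univ ≠ Ψ ∅) :
    ∑ A, (if Ψ A then (1 : ℤ) else 0) * (-1) ^ (Fintype.card X - #A) ≠ 0 := by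
  intro hsum
  have dvd_ends := natCast_dvd_sum_sub_empty_add_univ (G := G) hp hX
    (f := fun A => (if Ψ A then (1 : ℤ) else 0) * (-1) ^ (Fintype.card X - #A))
    (fun g A => by rw [hΨ, card_smul_finset])
  simp only [hsum, zero_sub, dvd_neg, card_empty, card_univ, Nat.sub_zero, Nat.sub_self, pow_zero,
    mul_one] at dvd_ends
  have isUnit_ends : IsUnit ((if Ψ ∅ then (1 : ℤ) else 0) * (-1) ^ Fintype.card X +
      if Ψ univ then 1 else 0) := by
    cases hu : Ψ univ <;> cases he : Ψ ∅ <;> simp_all [IsUnit.pow]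
  exact (Nat.prime_iff_prime_int.mp hp).not_isUnit (isUnit_of_dvd_unit dvd_ends isUnit_ends)

end TransitiveAction

/-- The componentwise action of pairs of permutations on a product, which is the action on the
edges of a biclique by relabelling its two sides independently. -/
instance permProdMulAction (V W : Type*) :
    MulAction (Equiv.Perm V × Equiv.Perm W) (V × W) where
  smul g x := (g.1 x.1, g.2 x.2)
  one_smul _ := rfl
  mul_smul _ _ _ := rfl

instance isPretransitive_permProd (V W : Type*) :
    MulAction.IsPretransitive (Equiv.Perm V × Equiv.Perm W) (V × W) where
  exists_smul_eq x y := by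
    classical
    exact ⟨(Equiv.swap x.1 y.1, Equiv.swap x.2 y.2),
      Prod.ext (Equiv.swap_apply_left ..) (Equiv.swap_apply_left ..)⟩

/-- Let `k` be a prime and let `Ψ` be a `{0,1}`-valued function on the subsets of
`[k] × [k]` that is invariant under the coordinatewise action of pairs of
permutations. If `Ψ` distinguishes the complete bipartite graph `𝐁_{k,k}` (the full
set) from the edgeless bipartite graph `𝐈_{k,k}` (the empty set), then the integer
`Σ_{A ⊆ [k] × [k]} Ψ(A) · (−1)^{k² − |A|}` is non-zero. -/
theorem stmt_5 (k : ℕ) (hk : k.Prime) (Ψ : Finset (Fin k × Fin k) → Bool)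
    (hΨ : ∀ (σ τ : Equiv.Perm (Fin k)) (A : Finset (Fin k × Fin k)),
      Ψ A = Ψ (A.image (fun p => (σ p.1, τ p.2))))
    (hne : Ψ (Finset.univ : Finset (Fin k × Fin k)) ≠ Ψ (∅ : Finset (Fin k × Fin k))) :
    (∑ A ∈ (Finset.univ : Finset (Fin k × Fin k)).powerset,
        (if Ψ A then (1 : ℤ) else 0) * (-1 : ℤ) ^ (k ^ 2 - A.card)) ≠ 0 := by
  simpa [sq] using stmt_5_general (G := Equiv.Perm (Fin k) × Equiv.Perm (Fin k)) hk
    (by simp [sq] : Fintype.card (Fin k × Fin k) = k ^ 2) (fun g A => (hΨ g.1 g.2 A).symm) hne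
end

section
/- Let k be a prime and let f be an integer-valued function on the subsets of [k] × [k] that is invariant under the coordinatewise action of pairs of permutations, i.e., f(A) = f({(σ(u), τ(v)) : (u,v) ∈ A}) for all permutations σ, τ of [k] and all A ⊆ [k] × [k]. Then Σ_{A ⊆ [k] × [k]} f(A) · (−1)^{|A|} ≡ f(∅) + (−1)^{k²} · f([k] × [k]) (mod k). -/
/-!
The translations of `[k] × [k]` form a transitive group of order `k²`, a `k`-group because `k` is
prime. It acts on the subsets of `[k] × [k]`, and `A ↦ f A * (-1) ^ |A|` is constant on orbits.
Every orbit has length a power of `k`, so modulo `k` only the fixed subsets contribute; by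
transitivity these are `∅` and `[k] × [k]`.
-/

open Finset MulAction
open scoped Pointwise

section PGroupAction

variable {p : ℕ} [Fact p.Prime] {G α M : Type*} [Group G] [MulAction G α]

theorem dvd_card_orbit_of_notMem_fixedPoints (hG : IsPGroup p G) {a : α} [Finite (orbit G a)]
    (ha : a ∉ fixedPoints G α) : p ∣ Nat.card (orbit G a) := by
  obtain ⟨n, hn⟩ := hG.card_orbit a
  have hn0 : n ≠ 0 := by
    rintro rfl
    have := Fintype.ofFinite (orbit G a)
    refine ha (mem_fixedPoints_iff_card_orbit_eq_one.2 ?_)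
    rw [← Nat.card_eq_fintype_card, hn, pow_zero]
  exact hn ▸ dvd_pow_self p hn0

variable [AddCommGroup M] [Module (ZMod p) M] {f : α → M}

theorem sum_orbit_eq_zero_of_notMem_fixedPoints (hG : IsPGroup p G)
    (hf : ∀ (g : G) (a : α), f (g • a) = f a) {a : α} [Fintype (orbit G a)]
    (ha : a ∉ fixedPoints G α) : ∑ b ∈ (orbit G a).toFinset, f b = 0 := by
  have hconst : ∀ b ∈ (orbit G a).toFinset, f b = f a := by
    intro b hb
    obtain ⟨g, rfl⟩ := Set.mem_toFinset.1 hb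
    exact hf g a
  obtain ⟨m, hm⟩ := dvd_card_orbit_of_notMem_fixedPoints hG ha
  rw [sum_congr rfl hconst, sum_const, Set.toFinset_card, ← Nat.card_eq_fintype_card, hm,
    mul_nsmul, ZModModule.char_nsmul_eq_zero p, nsmul_zero]

theorem sum_eq_sum_fixedPoints (hG : IsPGroup p G) (hf : ∀ (g : G) (a : α), f (g • a) = f a)
    [Fintype α] [Fintype (fixedPoints G α)] :
    ∑ a, f a = ∑ a ∈ (fixedPoints G α).toFinset, f a := by
  classical
  rw [← sum_compl_add_sum (fixedPoints G α).toFinset, add_eq_right]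
  refine sum_cancels_of_partition_cancels (orbitRel G α) fun a ha => ?_
  have hafix : a ∉ fixedPoints G α := by simpa only [mem_compl, Set.mem_toFinset] using ha
  have horbit : {b ∈ (fixedPoints G α).toFinsetᶜ | orbitRel G α b a} = (orbit G a).toFinset := by
    ext b
    simp only [mem_filter, mem_compl, Set.mem_toFinset, orbitRel_apply, and_iff_right_iff_imp]
    intro hb hbfix
    have hab : a = b := mem_fixedPoints'.1 hbfix a (mem_orbit_symm.1 hb)
    exact hafix (hab ▸ hbfix)
  rw [horbit]
  exact sum_orbit_eq_zero_of_notMem_fixedPoints hG hf hafix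

end PGroupAction

theorem fixedPoints_finset_eq_pair (G X : Type*) [Group G] [MulAction G X] [IsPretransitive G X]
    [Fintype X] [DecidableEq X] : fixedPoints G (Finset X) = {∅, univ} := by
  ext A
  simp only [mem_fixedPoints, Set.mem_insert_iff, Set.mem_singleton_iff]
  constructor
  · intro hA
    refine A.eq_empty_or_nonempty.imp_right fun ⟨a, ha⟩ => eq_univ_of_forall fun b => ?_
    obtain ⟨g, rfl⟩ := exists_smul_eq G a b
    exact hA g ▸ smul_mem_smul_finset ha
  · rintro (rfl | rfl) g
    exacts [smul_finset_empty g, smul_finset_univ]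

theorem stmt_6_general {p : ℕ} [Fact p.Prime] {G X M : Type*} [Group G] [MulAction G X]
    [IsPretransitive G X] [Fintype X] [Nonempty X] [DecidableEq X] [AddCommGroup M]
    [Module (ZMod p) M] (hG : IsPGroup p G) {f : Finset X → M}
    (hf : ∀ (g : G) (A : Finset X), f (g • A) = f A) :
    ∑ A, (-1 : ℤ) ^ #A • f A = f ∅ + (-1 : ℤ) ^ Fintype.card X • f univ := by
  classical
  have hinv (g : G) (A : Finset X) : (-1 : ℤ) ^ #(g • A) • f (g • A) = (-1 : ℤ) ^ #A • f A := by
    rw [card_smul_finset, hf]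
  have hfix : (fixedPoints G (Finset X)).toFinset = {∅, univ} := by
    ext A
    simp [fixedPoints_finset_eq_pair G X]
  rw [sum_eq_sum_fixedPoints hG hinv, hfix, sum_pair univ_nonempty.ne_empty.symm, card_empty,
    pow_zero, one_smul, card_univ]

/-- Let `k` be a prime and let `f` be an integer-valued function on the subsets of
`[k] × [k]` that is invariant under the coordinatewise action of pairs of
permutations. Then
`Σ_{A ⊆ [k] × [k]} f(A) · (−1)^{|A|} ≡ f(∅) + (−1)^{k²} · f([k] × [k]) (mod k)`. -/
theorem stmt_6 (k : ℕ) (hk : k.Prime) (f : Finset (Fin k × Fin k) → ℤ)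
    (hf : ∀ (σ τ : Equiv.Perm (Fin k)) (A : Finset (Fin k × Fin k)),
      f A = f (A.image (fun p => (σ p.1, τ p.2)))) :
    Int.ModEq (k : ℤ)
      (∑ A ∈ (Finset.univ : Finset (Fin k × Fin k)).powerset, f A * (-1 : ℤ) ^ A.card)
      (f ∅ + (-1 : ℤ) ^ (k ^ 2) * f Finset.univ) := by
  have : Fact k.Prime := ⟨hk⟩
  have : NeZero k := ⟨hk.ne_zero⟩
  have hG : IsPGroup k (Multiplicative (Fin k × Fin k)) := .of_card (n := 2) (by simp [sq])
  have hsum := stmt_6_general hG (f := fun A => (f A : ZMod k)) fun g A =>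
    congrArg _ (hf (Equiv.addLeft g.toAdd.1) (Equiv.addLeft g.toAdd.2) A).symm
  rw [← ZMod.intCast_eq_intCast_iff]
  simpa [mul_comm, sq] using hsum
end
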